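/- Let 3 ≤ t ≤ k < d be integers, and let {x_u : u ∈ {0,1}^k} and {y_w : w ∈ {0,1,2}^k} be families of non-negative real numbers such that y_{u+v} ≥ x_u + x_v for all u, v ∈ {0,1}^k, and such that x_u ≥ x_v whenever v_i ≥ u_i for all i. Then Σ_{w ∈ {0,1,2}^k} y_w^{d−k} ≥ Σ_{s=0}^{k} D'_s X_s, where D'_0 = D_0 − binom(k,t), D'_1 = D_1 + binom(k,t)/k, D'_{t−1} = D_{t−1} + binom(k,t)/binom(k,t−1), D'_t = D_t − 2^{d−k} + 1, and D'_s = D_s for all other s. -/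

import Mathlib

/-!
Identify `{0,1}^k` with the subsets of `Fin k`, and a word `w ∈ {0,1,2}^k` with the pair `A ⊆ B`,
where `A` is the set of coordinates equal to `2` and `B` the set of nonzero coordinates, so that
`w = 1_A + 1_B`. Put `m = d - k ≥ 1` and `g A = x_{1_A}^m`.

Since `x` is decreasing, `y_w ≥ x_{1_A} + x_{1_B}` gives `y_w^m ≥ g A + (2^m - 1) g B`
(`pow_add_pow_mul_le`), and the sum of this bound over all pairs is `∑ D_s X_s` (`sum_pairs`).
For the `C(k,t)` pairs `(∅, B)` with `|B| = t`, the word is also `1_{{i}} + 1_{B ∖ {i}}` for every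
`i ∈ B`, so `y_w^m ≥ g {i} + g (B ∖ {i})`; the average of this over `i ∈ B` replaces the first bound.
Double counting (`sum_marked_singleton`, `sum_marked_erase`) shows that the averages contribute
`C(k,t)/k` to the coefficient of `X_1` and `C(k,t)/C(k,t-1)` to that of `X_{t-1}`, while the bounds
they replace take `C(k,t)` off the coefficient of `X_0` and `2^m - 1` off that of `X_t`.
-/

/-- The set `{0,1,…,n-1}^k` as a finset of functions `Fin k → ℕ`. -/
def cube (k n : ℕ) : Finset (Fin k → ℕ) :=
  Fintype.piFinset fun _ => Finset.range n

/-- `D_s = 2^{k-s} + (2^{d-k} - 1) 2^s`. -/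
noncomputable def Dcoef (d k s : ℕ) : ℝ :=
  2 ^ (k - s) + (2 ^ (d - k) - 1) * 2 ^ s

/-- The modified coefficients of Lemma 7 (with parameter `t`, `3 ≤ t ≤ k`):
`D'_0 = D_0 - C(k,t)`, `D'_1 = D_1 + C(k,t)/k`,
`D'_{t-1} = D_{t-1} + C(k,t)/C(k,t-1)`, `D'_t = D_t - 2^{d-k} + 1`,
and `D'_s = D_s` otherwise. -/
noncomputable def Dcoef' (d k t : ℕ) : ℕ → ℝ := fun s =>
  if s = 0 then Dcoef d k 0 - (k.choose t : ℝ)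
  else if s = 1 then Dcoef d k 1 + (k.choose t : ℝ) / (k : ℝ)
  else if s = t - 1 then Dcoef d k (t - 1) + (k.choose t : ℝ) / (k.choose (t - 1) : ℝ)
  else if s = t then Dcoef d k t - 2 ^ (d - k) + 1
  else Dcoef d k s

/-- `X_s = ∑_{u ∈ {0,1}^k, |u| = s} x_u^{d-k}`. -/
noncomputable def Xsum (d k : ℕ) (x : (Fin k → ℕ) → ℝ) (s : ℕ) : ℝ :=
  ∑ u ∈ (cube k 2).filter (fun u => ∑ i, u i = s), x u ^ (d - k)

open Finset

/-! ### Words as sets of coordinates -/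

/-- The indicator vector of a set of coordinates. -/
def ind {k : ℕ} (A : Finset (Fin k)) : Fin k → ℕ := fun i => if i ∈ A then 1 else 0

lemma ind_le {k : ℕ} (A : Finset (Fin k)) (i : Fin k) : ind A i ≤ 1 := by
  unfold ind; split_ifs <;> simp

/-! ### The pointwise inequality -/

/-- The function `b ↦ (a + b)^m - a^m - (2^m - 1) b^m` vanishes at `b = 0` and at `b = a`; here it
is shown to be nonnegative in between. -/
lemma pow_add_pow_mul_le {a b : ℝ} (hb : 0 ≤ b) (hab : b ≤ a) {m : ℕ} (hm : 1 ≤ m) :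
    a ^ m + (2 ^ m - 1) * b ^ m ≤ (a + b) ^ m := by
  induction m, hm using Nat.le_induction with
  | base => norm_num
  | succ n hn ih =>
    have ha : 0 ≤ a := hb.trans hab
    have h1 : b ^ n ≤ a ^ n := pow_le_pow_left₀ hb hab n
    have h2 : (1 : ℝ) ≤ 2 ^ n := one_le_pow₀ (by norm_num)
    have h3 := mul_le_mul_of_nonneg_right ih (add_nonneg ha hb)
    have h4 : 0 ≤ b * (a ^ n - b ^ n) := mul_nonneg hb (sub_nonneg.2 h1)
    have h5 : 0 ≤ (2 ^ n - 1) * (b ^ n * (a - b)) :=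
      mul_nonneg (sub_nonneg.2 h2) (mul_nonneg (pow_nonneg hb n) (sub_nonneg.2 hab))
    calc _ ≤ (a ^ n + (2 ^ n - 1) * b ^ n) * (a + b) := by
            simp only [pow_succ]; nlinarith
      _ ≤ _ := by rw [pow_succ (a + b)]; exact h3

/-! ### Sums over words as sums over sets -/

lemma Xsum_eq {d k : ℕ} (x : (Fin k → ℕ) → ℝ) (s : ℕ) :
    Xsum d k x s = ∑ A ∈ powersetCard s univ, x (ind A) ^ (d - k) := by
  unfold Xsum
  symm
  refine sum_bij' (fun A _ => ind A) (fun u _ => univ.filter fun i => u i = 1) ?_ ?_ ?_ ?_ ?_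
  · intro A hA
    simp only [mem_powersetCard, subset_univ, true_and] at hA
    simp [cube, ind, hA, apply_ite (· ≤ 1)]
  · intro u hu
    simp only [cube, mem_filter, Fintype.mem_piFinset, mem_range] at hu
    simp only [mem_powersetCard, subset_univ, true_and, card_filter]
    rw [← hu.2]
    refine sum_congr rfl fun i _ => ?_
    have := hu.1 i
    split_ifs <;> omega
  · intro A _
    ext i; simp [ind]
  · intro u hu
    simp only [cube, mem_filter, Fintype.mem_piFinset, mem_range] at hu
    ext i
    have := hu.1 i
    simp only [ind, mem_filter, mem_univ, true_and]
    split_ifs <;> omega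
  · intros; rfl

/-- Words over `{0,1,2}` correspond to pairs `A ⊆ B`. -/
lemma sum_cube_three {k : ℕ} (f : (Fin k → ℕ) → ℝ) :
    ∑ w ∈ cube k 3, f w =
      ∑ B : Finset (Fin k), ∑ A ∈ B.powerset, f (ind A + ind B) := by
  rw [sum_sigma']
  refine sum_bij' (fun w _ => ⟨univ.filter fun i => w i ≠ 0, univ.filter fun i => w i = 2⟩)
    (fun p _ => ind p.2 + ind p.1) ?_ ?_ ?_ ?_ ?_
  · intro w _
    simp only [mem_sigma, mem_univ, mem_powerset, true_and]
    intro i hi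
    simp only [mem_filter, mem_univ, true_and] at hi ⊢
    omega
  · intro p _
    simp only [cube, Fintype.mem_piFinset, mem_range, Pi.add_apply]
    intro i
    have := ind_le p.1 i
    have := ind_le p.2 i
    omega
  · intro w hw
    simp only [cube, Fintype.mem_piFinset, mem_range] at hw
    ext i
    have := hw i
    simp only [ind, mem_filter, mem_univ, true_and, Pi.add_apply]
    split_ifs <;> omega
  · rintro ⟨B, A⟩ hp
    simp only [mem_sigma, mem_univ, mem_powerset, true_and] at hp
    have h1 : (univ.filter fun i => (ind A + ind B) i ≠ 0) = B := by
      ext i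
      have := @hp i
      rw [mem_filter]
      simp only [ind, Pi.add_apply, mem_univ, true_and]
      split_ifs <;> simp_all
    have h2 : (univ.filter fun i => (ind A + ind B) i = 2) = A := by
      ext i
      have := @hp i
      rw [mem_filter]
      simp only [ind, Pi.add_apply, mem_univ, true_and]
      split_ifs <;> simp_all
    simp only [h1, h2]
  · intro w hw
    simp only [cube, Fintype.mem_piFinset, mem_range] at hw
    congr 1
    ext i
    have := hw i
    simp only [ind, mem_filter, mem_univ, true_and, Pi.add_apply]
    split_ifs <;> omega

/-! ### Double counting -/

/-- Each `A` has `2^(k-|A|)` supersets and each `B` has `2^|B|` subsets. -/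
lemma sum_pairs {d k : ℕ} (g : Finset (Fin k) → ℝ) :
    ∑ B : Finset (Fin k), ∑ A ∈ B.powerset, (g A + (2 ^ (d - k) - 1) * g B) =
      ∑ s ∈ range (k + 1), Dcoef d k s * ∑ A ∈ powersetCard s univ, g A := by
  have h1 : ∑ B : Finset (Fin k), ∑ A ∈ B.powerset, g A
      = ∑ A : Finset (Fin k), 2 ^ (k - #A) * g A := by
    rw [sum_comm' (t' := univ) (s' := fun A => Icc A univ) (by simp)]
    refine sum_congr rfl fun A _ => ?_
    rw [sum_const, card_Icc_finset (subset_univ A)]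
    simp
  have h2 : ∑ B : Finset (Fin k), ∑ A ∈ B.powerset, (g A + (2 ^ (d - k) - 1) * g B)
      = ∑ A : Finset (Fin k), Dcoef d k #A * g A := by
    simp only [sum_add_distrib, h1, sum_const, card_powerset]
    rw [← sum_add_distrib]
    refine sum_congr rfl fun A _ => ?_
    simp only [Dcoef, nsmul_eq_mul]
    push_cast
    ring
  rw [h2, ← powerset_univ, sum_powerset, card_univ, Fintype.card_fin]
  refine sum_congr rfl fun s _ => ?_
  rw [mul_sum]
  refine sum_congr rfl fun A hA => ?_
  rw [(mem_powersetCard.1 hA).2]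

/-- Removing a marked element from a `t`-set. -/
lemma sum_marked {k t : ℕ} (ht : 1 ≤ t) (F : Fin k → Finset (Fin k) → ℝ) :
    ∑ B ∈ powersetCard t univ, ∑ i ∈ B, F i (B.erase i) =
      ∑ i : Fin k, ∑ A ∈ powersetCard (t - 1) (univ.erase i), F i A := by
  rw [sum_sigma', sum_sigma']
  refine sum_bij' (fun p _ => ⟨p.2, p.1.erase p.2⟩) (fun p _ => ⟨insert p.1 p.2, p.1⟩)
    ?_ ?_ ?_ ?_ ?_
  · rintro ⟨B, i⟩ h
    simp only [mem_sigma, mem_powersetCard, subset_univ, true_and] at h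
    simp only [mem_sigma, mem_univ, mem_powersetCard, true_and, card_erase_of_mem h.2, h.1,
      and_true]
    exact erase_subset_erase _ (subset_univ _)
  · rintro ⟨i, A⟩ h
    simp only [mem_sigma, mem_univ, mem_powersetCard, true_and, subset_erase] at h
    simp only [mem_sigma, mem_powersetCard, subset_univ, true_and, mem_insert_self, and_true,
      card_insert_of_notMem h.1.2]
    omega
  · rintro ⟨B, i⟩ h
    simp only [mem_sigma] at h
    simp [insert_erase h.2]
  · rintro ⟨i, A⟩ h
    simp only [mem_sigma, mem_univ, mem_powersetCard, true_and, subset_erase] at h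
    simp [erase_insert h.1.2]
  · intros; rfl

lemma sum_marked_singleton {k t : ℕ} (ht : 1 ≤ t) (htk : t ≤ k) (g : Finset (Fin k) → ℝ) :
    (∑ B ∈ powersetCard t univ, ∑ i ∈ B, g {i}) / t =
      (k.choose t : ℝ) / k * ∑ A ∈ powersetCard 1 univ, g A := by
  rw [sum_marked ht fun i _ => g {i}]
  simp only [sum_const, card_powersetCard, card_erase_of_mem (mem_univ _), card_univ,
    Fintype.card_fin, powersetCard_one, sum_map, nsmul_eq_mul]
  rw [← mul_sum]
  obtain ⟨t, rfl⟩ := Nat.exists_eq_succ_of_ne_zero (by omega : t ≠ 0)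
  obtain ⟨k, rfl⟩ := Nat.exists_eq_succ_of_ne_zero (by omega : k ≠ 0)
  have h : ((k + 1 : ℕ) : ℝ) * k.choose t = (k + 1).choose (t + 1) * (t + 1 : ℕ) := by
    exact_mod_cast Nat.add_one_mul_choose_eq k t
  simp only [Nat.succ_eq_add_one, Nat.add_sub_cancel, Function.Embedding.coeFn_mk]
  have hk : ((k + 1 : ℕ) : ℝ) ≠ 0 := by positivity
  have ht' : ((t + 1 : ℕ) : ℝ) ≠ 0 := by positivity
  rw [mul_div_right_comm]
  congr 1
  rw [div_eq_div_iff ht' hk, ← h]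
  ring

lemma sum_marked_erase {k t : ℕ} (ht : 1 ≤ t) (htk : t ≤ k) (g : Finset (Fin k) → ℝ) :
    (∑ B ∈ powersetCard t univ, ∑ i ∈ B, g (B.erase i)) / t =
      (k.choose t : ℝ) / k.choose (t - 1) * ∑ A ∈ powersetCard (t - 1) univ, g A := by
  rw [sum_marked ht fun _ A => g A]
  rw [sum_comm' (t' := powersetCard (t - 1) univ) (s' := fun A => Aᶜ)
    (by simp [mem_powersetCard, subset_erase])]
  have h1 : ∑ A ∈ powersetCard (t - 1) (univ : Finset (Fin k)), ∑ i ∈ Aᶜ, g A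
      = ((k - (t - 1) : ℕ) : ℝ) * ∑ A ∈ powersetCard (t - 1) univ, g A := by
    rw [mul_sum]
    refine sum_congr rfl fun A hA => ?_
    rw [sum_const, card_compl, (mem_powersetCard.1 hA).2, Fintype.card_fin, nsmul_eq_mul]
  rw [h1, mul_div_right_comm]
  congr 1
  obtain ⟨t, rfl⟩ := Nat.exists_eq_succ_of_ne_zero (by omega : t ≠ 0)
  simp only [Nat.succ_eq_add_one, Nat.add_sub_cancel]
  have h : (k.choose (t + 1) : ℝ) * (t + 1 : ℕ) = k.choose t * (k - t : ℕ) := by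
    exact_mod_cast Nat.choose_succ_right_eq k t
  have hc : (k.choose t : ℝ) ≠ 0 := by
    exact_mod_cast (Nat.choose_pos (by omega : t ≤ k)).ne'
  have ht' : ((t + 1 : ℕ) : ℝ) ≠ 0 := by positivity
  rw [div_eq_div_iff ht' hc, h]
  ring

/-! ### The modified coefficients and the inequality -/

/-- The coefficients `D'` as `D` plus four corrections; `3 ≤ t` makes the four indices distinct. -/
lemma sum_Dcoef' {d k t : ℕ} (ht3 : 3 ≤ t) (htk : t ≤ k) (X : ℕ → ℝ) :
    ∑ s ∈ range (k + 1), Dcoef' d k t s * X s =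
      ∑ s ∈ range (k + 1), Dcoef d k s * X s - k.choose t * X 0
        + (k.choose t : ℝ) / k * X 1 + (k.choose t : ℝ) / k.choose (t - 1) * X (t - 1)
        - (2 ^ (d - k) - 1) * X t := by
  have h : ∀ s, Dcoef' d k t s * X s = Dcoef d k s * X s
      - (if s = 0 then k.choose t * X 0 else 0)
      + (if s = 1 then (k.choose t : ℝ) / k * X 1 else 0)
      + (if s = t - 1 then (k.choose t : ℝ) / k.choose (t - 1) * X (t - 1) else 0)
      - (if s = t then (2 ^ (d - k) - 1) * X t else 0) := by
    intro s
    unfold Dcoef'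
    split_ifs <;> first | omega | (subst_vars; ring)
  simp only [h, sum_add_distrib, sum_sub_distrib, sum_ite_eq', mem_range]
  rw [if_pos (by omega), if_pos (by omega), if_pos (by omega), if_pos (by omega)]

/-- Modified Strong Inequality (Lemma 7): for `3 ≤ t ≤ k < d`,
`∑_{w ∈ {0,1,2}^k} y_w^{d-k} ≥ ∑_{s=0}^k D'_s X_s`. -/
theorem stmt9 (d k t : ℕ) (ht3 : 3 ≤ t) (htk : t ≤ k) (hkd : k < d)
    (x y : (Fin k → ℕ) → ℝ)
    (hx : ∀ u, (∀ i, u i ≤ 1) → 0 ≤ x u)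
    (hy : ∀ w, (∀ i, w i ≤ 2) → 0 ≤ y w)
    (hadd : ∀ u v : Fin k → ℕ, (∀ i, u i ≤ 1) → (∀ i, v i ≤ 1) →
      x u + x v ≤ y (u + v))
    (hmono : ∀ u v : Fin k → ℕ, (∀ i, u i ≤ 1) → (∀ i, v i ≤ 1) →
      (∀ i, u i ≤ v i) → x v ≤ x u) :
    ∑ w ∈ cube k 3, y w ^ (d - k) ≥
      ∑ s ∈ Finset.range (k + 1), Dcoef' d k t s * Xsum d k x s := by
  have hm : 1 ≤ d - k := by omega
  set g : Finset (Fin k) → ℝ := fun A => x (ind A) ^ (d - k) with hg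
  have hbase : ∀ A B : Finset (Fin k), A ⊆ B →
      g A + (2 ^ (d - k) - 1) * g B ≤ y (ind A + ind B) ^ (d - k) := by
    intro A B hAB
    have hle : x (ind B) ≤ x (ind A) := hmono _ _ (ind_le A) (ind_le B) fun i => by
      have := @hAB i
      simp only [ind]
      split_ifs <;> simp_all
    refine (pow_add_pow_mul_le (hx _ (ind_le B)) hle hm).trans ?_
    exact pow_le_pow_left₀ (add_nonneg (hx _ (ind_le A)) (hx _ (ind_le B)))
      (hadd _ _ (ind_le A) (ind_le B)) _
  have hone : ∀ B : Finset (Fin k), ∀ i ∈ B,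
      g {i} + g (B.erase i) ≤ y (ind ∅ + ind B) ^ (d - k) := by
    intro B i hi
    have hw : ind (∅ : Finset (Fin k)) + ind B = ind {i} + ind (B.erase i) := by
      ext j
      simp only [ind, Pi.add_apply]
      by_cases hj : j = i
      · subst hj; simp [hi]
      · simp [hj]
    have h1 := hx _ (ind_le ({i} : Finset (Fin k)))
    have h2 := hx _ (ind_le (B.erase i))
    rw [hw]
    exact (pow_add_pow_le h1 h2 (by omega)).trans
      (pow_le_pow_left₀ (add_nonneg h1 h2) (hadd _ _ (ind_le _) (ind_le _)) _)
  have htpos : (0 : ℝ) < t := by exact_mod_cast (by omega : 0 < t)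
  -- The improved bound for `(∅, B)`, minus the bound it replaces.
  let E : Finset (Fin k) → ℝ := fun B =>
    ((∑ i ∈ B, g {i}) / t + (∑ i ∈ B, g (B.erase i)) / t) - (g ∅ + (2 ^ (d - k) - 1) * g B)
  have hB : ∀ B : Finset (Fin k),
      ∑ A ∈ B.powerset, (g A + (2 ^ (d - k) - 1) * g B) + (if #B = t then E B else 0)
        ≤ ∑ A ∈ B.powerset, y (ind A + ind B) ^ (d - k) := by
    intro B
    split_ifs with hc
    · have havg : (∑ i ∈ B, g {i}) / t + (∑ i ∈ B, g (B.erase i)) / t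
          ≤ y (ind ∅ + ind B) ^ (d - k) := by
        rw [← add_div, ← sum_add_distrib, div_le_iff₀ htpos]
        refine (sum_le_sum (hone B)).trans ?_
        rw [sum_const, hc, nsmul_eq_mul, mul_comm]
      have hrest : ∑ A ∈ B.powerset.erase ∅, (g A + (2 ^ (d - k) - 1) * g B)
          ≤ ∑ A ∈ B.powerset.erase ∅, y (ind A + ind B) ^ (d - k) :=
        sum_le_sum fun A hA => hbase A B (mem_powerset.1 (mem_of_mem_erase hA))
      rw [← add_sum_erase _ _ (empty_mem_powerset B), ← add_sum_erase _ _ (empty_mem_powerset B)]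
      simp only [E]
      linarith
    · rw [add_zero]
      exact sum_le_sum fun A hA => hbase A B (mem_powerset.1 hA)
  have hE : ∑ B : Finset (Fin k), (if #B = t then E B else 0) =
      (k.choose t : ℝ) / k * Xsum d k x 1
        + (k.choose t : ℝ) / k.choose (t - 1) * Xsum d k x (t - 1)
        - (k.choose t * Xsum d k x 0 + (2 ^ (d - k) - 1) * Xsum d k x t) := by
    rw [← sum_filter, univ_filter_card_eq]
    simp only [E, sum_sub_distrib, sum_add_distrib, ← sum_div, ← mul_sum, sum_const,
      card_powersetCard, card_univ, Fintype.card_fin, nsmul_eq_mul]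
    rw [sum_marked_singleton (by omega) htk g, sum_marked_erase (by omega) htk g]
    simp [Xsum_eq, hg]
  have hsum := sum_le_sum fun B (_ : B ∈ (univ : Finset (Finset (Fin k)))) => hB B
  rw [sum_add_distrib, hE, sum_pairs (d := d) g,
    ← sum_cube_three fun w => y w ^ (d - k)] at hsum
  rw [ge_iff_le, sum_Dcoef' ht3 htk]
  simp only [Xsum_eq] at hsum ⊢
  linarith
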